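/- Let ρ be any n-qubit density matrix, S ⊆ Fin n nonempty with |S| = s, and P(q) = tr(ρ |Φ̃_q⟩⟨Φ̃_q|), q ∈ {1,2,3,4}^S, the product SIC-POVM outcome distribution. Then: (i) P(q) ≤ 2^{−s} for every q; and (ii) Σ_q P(q)³ ≤ 2^{−s} · Σ_q P(q)². Moreover, if ρ = |ψ⟩⟨ψ| is pure then Σ_q P(q)² ≤ 3^{−s}, and hence Σ_q P(q)³ ≤ 6^{−s}. -/

import Mathlib

open Matrix MeasureTheory
open scoped BigOperators ComplexConjugate Kronecker ComplexOrder

/-- `n`-qubit operators: matrices indexed by functions `Fin n → Fin 2`. -/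
abbrev QMat (n : ℕ) : Type := Matrix (Fin n → Fin 2) (Fin n → Fin 2) ℂ

/-- Combine an assignment on `α` and one on its complement into a full index. -/
noncomputable def embedIdx {n : ℕ} (α : Finset (Fin n)) (i : {x : Fin n // x ∈ α} → Fin 2)
    (k : {x : Fin n // x ∉ α} → Fin 2) : Fin n → Fin 2 :=
  fun x => if h : x ∈ α then i ⟨x, h⟩ else k ⟨x, h⟩

/-- The reduced density matrix on the qubits in `α` (partial trace over the rest). -/
noncomputable def reduced {n : ℕ} (ρ : QMat n) (α : Finset (Fin n)) :
    Matrix ({x : Fin n // x ∈ α} → Fin 2) ({x : Fin n // x ∈ α} → Fin 2) ℂ :=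
  fun i j => ∑ k : ({x : Fin n // x ∉ α} → Fin 2), ρ (embedIdx α i k) (embedIdx α j k)

/-- The concentratable entanglement `C_ψ(S) = 1 - 2^{-|S|} ∑_{α ⊆ S} tr(ρ_α²)`. -/
noncomputable def CE {n : ℕ} (ρ : QMat n) (S : Finset (Fin n)) : ℝ :=
  1 - (1 / 2 : ℝ) ^ S.card *
    ∑ α ∈ S.powerset, (Matrix.trace (reduced ρ α * reduced ρ α)).re

/-- Tensor product of single-qubit operators on the qubits in `S`, identity elsewhere. -/
noncomputable def localOp {n : ℕ} (S : Finset (Fin n))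
    (V : {i : Fin n // i ∈ S} → Matrix (Fin 2) (Fin 2) ℂ) : QMat n :=
  fun x y => ∏ i : Fin n,
    if h : i ∈ S then V ⟨i, h⟩ (x i) (y i)
    else (if x i = y i then 1 else 0)

/-- The four SIC vectors `φ₁, …, φ₄` in `ℂ²`. -/
noncomputable def sicVec : Fin 4 → Fin 2 → ℂ :=
  ![![1, 0],
    ![((1 / Real.sqrt 3 : ℝ) : ℂ), ((Real.sqrt (2/3) : ℝ) : ℂ)],
    ![((1 / Real.sqrt 3 : ℝ) : ℂ),
      ((Real.sqrt (2/3) : ℝ) : ℂ) * Complex.exp (2 * Real.pi * Complex.I / 3)],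
    ![((1 / Real.sqrt 3 : ℝ) : ℂ),
      ((Real.sqrt (2/3) : ℝ) : ℂ) * Complex.exp (4 * Real.pi * Complex.I / 3)]]

/-- The rescaled SIC-POVM vectors `φ̃ᵢ = φᵢ/√2`. -/
noncomputable def sicTilde (i : Fin 4) : Fin 2 → ℂ :=
  fun a => sicVec i a / ((Real.sqrt 2 : ℝ) : ℂ)

/-- The product SIC-POVM element `|Φ̃_q⟩⟨Φ̃_q| = ⊗_{i∈S} |φ̃_{qᵢ}⟩⟨φ̃_{qᵢ}|` on the qubits
in `S`, identity elsewhere. -/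
noncomputable def sicProj {n : ℕ} (S : Finset (Fin n))
    (q : {i : Fin n // i ∈ S} → Fin 4) : QMat n :=
  localOp S (fun i => Matrix.vecMulVec (sicTilde (q i)) (star (sicTilde (q i))))

/-- The SIC-POVM outcome probability `P(q) = tr(ρ |Φ̃_q⟩⟨Φ̃_q|)`. -/
noncomputable def sicBorn {n : ℕ} (ρ : QMat n) (S : Finset (Fin n))
    (q : {i : Fin n // i ∈ S} → Fin 4) : ℝ :=
  (Matrix.trace (ρ * sicProj S q)).re

/-!
For a state `ρ ≥ 0`, the map `V ↦ tr (ρ ⊗ᵢ Vᵢ)` is a positive multilinear form, so both bounds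
reduce to a single qubit.

Each SIC effect satisfies `Eⱼ ≤ tr Eⱼ • 1 = 1/2`, and a positive multilinear form is monotone on
nonnegative tuples; hence `P(q) ≤ 2^{-s}`, and the first cubic bound follows termwise.

With the outcomes at all other sites fixed, the probabilities at one site are `tr (σ Eⱼ)` for some
`σ ≥ 0`, an unnormalized conditional state. The 2-design identity
`∑ⱼ tr (σ Eⱼ)² = ((tr σ)² + tr σ²) / 6` and `tr σ² ≤ (tr σ)²` bound the sum of their squares by
`(tr σ)² / 3`. Summing out the sites one at a time gains a factor `1/3` each, so that
`∑ P² ≤ 3^{-s}`.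
-/

open scoped MatrixOrder

section PositiveMultilinear

variable {R M ι κ : Type*} [CommRing R] [PartialOrder R]
  [AddCommGroup M] [PartialOrder M] [Module R M]

/-- A scalar-valued multilinear map is positive if it is nonnegative on tuples of nonnegative
arguments; the joint outcome probabilities of local measurements are values of such a map. -/
def IsPositiveMultilinear (F : MultilinearMap R (fun _ : ι => M) R) : Prop :=
  ∀ ⦃v : ι → M⦄, 0 ≤ v → 0 ≤ F v

namespace IsPositiveMultilinear

lemma domDomRestrict {F : MultilinearMap R (fun _ : ι => M) R} (hF : IsPositiveMultilinear F)
    (P : ι → Prop) [DecidablePred P] {z : {i // ¬P i} → M} (hz : 0 ≤ z) :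
    IsPositiveMultilinear (F.domDomRestrict P z) := by
  refine fun v hv => hF fun i => ?_
  dsimp only
  split_ifs with hi
  · exact hv ⟨i, hi⟩
  · exact hz ⟨i, hi⟩

lemma curryLeft {n : ℕ} {F : MultilinearMap R (fun _ : Fin (n + 1) => M) R}
    (hF : IsPositiveMultilinear F) {x : M} (hx : 0 ≤ x) :
    IsPositiveMultilinear (F.curryLeft x) :=
  fun _ hv => hF (Fin.le_cons.mpr ⟨hx, hv⟩)

variable [IsOrderedRing R] [IsOrderedAddMonoid M]

lemma apply_le_apply [Finite ι] {F : MultilinearMap R (fun _ : ι => M) R}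
    (hF : IsPositiveMultilinear F) {v w : ι → M} (hv : 0 ≤ v) (hvw : v ≤ w) : F v ≤ F w := by
  classical
  cases nonempty_fintype ι
  suffices h : ∀ s : Finset ι, F v ≤ F (s.piecewise w v) by
    simpa only [Finset.piecewise_univ] using h Finset.univ
  intro s
  induction s using Finset.induction_on with
  | empty => rw [Finset.piecewise_empty]
  | insert a s ha ih =>
    set u := s.piecewise w v with hu
    have hdiff : F (Function.update u a (w a - v a)) = F (Function.update u a (w a)) - F u := by
      rw [F.map_update_sub, ← Finset.piecewise_eq_of_notMem s w v ha, ← hu,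
        Function.update_eq_self]
    have hnonneg : 0 ≤ F (Function.update u a (w a - v a)) := by
      refine hF (le_update_iff.mpr ⟨sub_nonneg.mpr (hvw a), fun i _ => ?_⟩)
      exact Finset.le_piecewise_of_le_of_le s (hv.trans hvw) hv i
    rw [Finset.piecewise_insert]
    exact ih.trans (sub_nonneg.mp (hdiff ▸ hnonneg))

section Fin

variable {n : ℕ} {F : MultilinearMap R (fun _ : Fin (n + 1) => M) R}

/-- The positive functional of the first argument obtained by fixing all the others: up to
normalization, the state of the first site conditioned on outcomes elsewhere. -/
def headFunctional (hF : IsPositiveMultilinear F) {v : Fin n → M} (hv : 0 ≤ v) : M →ₚ[R] R :=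
  .mk₀ (F.toLinearMap (Fin.cons 0 v) 0) fun x hx => by
    rw [MultilinearMap.toLinearMap_apply, Fin.update_cons_zero]
    exact hF.curryLeft hx hv

lemma headFunctional_apply (hF : IsPositiveMultilinear F) {v : Fin n → M} (hv : 0 ≤ v) (x : M) :
    hF.headFunctional hv x = F (Fin.cons x v) := by
  change F (Function.update (Fin.cons 0 v) 0 x) = _
  rw [Fin.update_cons_zero]

end Fin

variable [Fintype κ] {E : κ → M} {e : M} {c : R} {p : ℕ}

lemma sum_pow_le_fin (hE : 0 ≤ E) (he : 0 ≤ e) (hc : 0 ≤ c)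
    (hsite : ∀ L : M →ₚ[R] R, ∑ j, L (E j) ^ p ≤ c * L e ^ p) {n : ℕ}
    {F : MultilinearMap R (fun _ : Fin n => M) R} (hF : IsPositiveMultilinear F) :
    ∑ q : Fin n → κ, F (E ∘ q) ^ p ≤ c ^ n * F (fun _ => e) ^ p := by
  induction n with
  | zero => simp [Subsingleton.elim _ (fun _ : Fin 0 => e)]
  | succ n ih =>
    have hq (q : Fin n → κ) : 0 ≤ E ∘ q := fun i => hE (q i)
    calc ∑ q : Fin (n + 1) → κ, F (E ∘ q) ^ p
        = ∑ q : Fin n → κ, ∑ j, F (Fin.cons (E j) (E ∘ q)) ^ p := by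
          rw [← (Fin.consEquiv fun _ => κ).sum_comp, Fintype.sum_prod_type_right]
          refine Finset.sum_congr rfl fun q _ => Finset.sum_congr rfl fun j _ => ?_
          congr 2
          exact funext (Fin.cases rfl fun _ => rfl)
      _ ≤ ∑ q : Fin n → κ, c * F (Fin.cons e (E ∘ q)) ^ p := by
          refine Finset.sum_le_sum fun q _ => ?_
          simpa only [headFunctional_apply] using hsite (hF.headFunctional (hq q))
      _ = c * ∑ q : Fin n → κ, F.curryLeft e (E ∘ q) ^ p := by
          simp only [Finset.mul_sum, MultilinearMap.curryLeft_apply]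
      _ ≤ c * (c ^ n * F.curryLeft e (fun _ => e) ^ p) :=
          mul_le_mul_of_nonneg_left (ih (hF.curryLeft he)) hc
      _ = c ^ (n + 1) * F (fun _ => e) ^ p := by
          rw [F.curryLeft_apply, ← mul_assoc, ← pow_succ']
          congr 3
          exact funext (Fin.cases rfl fun _ => rfl)

lemma sum_pow_le [Fintype ι] [DecidableEq ι] {F : MultilinearMap R (fun _ : ι => M) R}
    (hF : IsPositiveMultilinear F) (hE : 0 ≤ E) (he : 0 ≤ e) (hc : 0 ≤ c)
    (hsite : ∀ L : M →ₚ[R] R, ∑ j, L (E j) ^ p ≤ c * L e ^ p) :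
    ∑ q : ι → κ, F (E ∘ q) ^ p ≤ c ^ Fintype.card ι * F (fun _ => e) ^ p := by
  let σ := Fintype.equivFin ι
  have hσF : IsPositiveMultilinear (F.domDomCongr σ) := fun v hv => hF fun i => hv (σ i)
  rw [← (σ.arrowCongr (Equiv.refl κ)).symm.sum_comp]
  exact sum_pow_le_fin hE he hc hsite hσF

end IsPositiveMultilinear
end PositiveMultilinear

section PositiveMatrix

variable {m : Type*} [Fintype m]

lemma trace_mul_nonneg {A B : Matrix m m ℂ} (hA : 0 ≤ A) (hB : 0 ≤ B) : 0 ≤ trace (A * B) := by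
  classical
  obtain ⟨C, rfl⟩ := CStarAlgebra.nonneg_iff_eq_star_mul_self.mp hB
  rw [← mul_assoc, trace_mul_comm, ← mul_assoc]
  exact (hA.posSemidef.mul_mul_conjTranspose_same C).trace_nonneg

lemma le_trace_smul_one [DecidableEq m] {A : Matrix m m ℂ} (hA : 0 ≤ A) : A ≤ A.trace • 1 := by
  have hH := hA.posSemidef.isHermitian
  have hle : A ≤ algebraMap ℝ _ (∑ i, hH.eigenvalues i) := by
    refine le_algebraMap_of_spectrum_le (fun r hr => ?_) hH
    obtain ⟨i, rfl⟩ := hH.spectrum_real_eq_range_eigenvalues ▸ hr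
    exact Finset.single_le_sum (fun j _ => hA.posSemidef.eigenvalues_nonneg j) (Finset.mem_univ i)
  rw [IsScalarTower.algebraMap_apply ℝ ℂ, Algebra.algebraMap_eq_smul_one, map_sum] at hle
  exact hH.trace_eq_sum_eigenvalues ▸ hle

lemma trace_mul_self_le_sq_trace {A : Matrix m m ℂ} (hA : 0 ≤ A) :
    trace (A * A) ≤ trace A ^ 2 := by
  classical
  have h := trace_mul_nonneg hA (sub_nonneg.mpr (le_trace_smul_one hA))
  rwa [mul_sub, mul_smul_comm, mul_one, trace_sub, trace_smul, smul_eq_mul, ← sq, sub_nonneg] at h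

lemma exists_nonneg_trace_mul_eq (L : Matrix m m ℂ →ₚ[ℂ] ℂ) :
    ∃ σ : Matrix m m ℂ, 0 ≤ σ ∧ ∀ A, L A = trace (σ * A) := by
  classical
  let σ : Matrix m m ℂ := fun a b => L (single b a 1)
  have hσ (A : Matrix m m ℂ) : L A = trace (σ * A) := by
    conv_lhs => rw [matrix_eq_sum_single A, Finset.sum_comm]
    simp only [map_sum, trace, diag_apply, mul_apply]
    refine Finset.sum_congr rfl fun a _ => Finset.sum_congr rfl fun b _ => ?_
    rw [← mul_one (A b a), ← smul_eq_mul, ← smul_single, map_smul, smul_eq_mul, smul_eq_mul,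
      mul_one, mul_comm]
  refine ⟨σ, nonneg_iff_posSemidef.mpr (.of_dotProduct_mulVec_nonneg ?_ fun x => ?_), hσ⟩
  · ext a b
    change star (L (single a b 1)) = L (single b a 1)
    rw [← map_star, star_eq_conjTranspose, conjTranspose_single, star_one]
  · have h := map_nonneg L (posSemidef_vecMulVec_self_star x).nonneg
    rwa [hσ, mul_vecMulVec, trace_vecMulVec, dotProduct_comm] at h

end PositiveMatrix

section TensorOp

variable {ι m : Type*} [Fintype ι]

section CommSemiring

variable {R : Type*} [CommSemiring R]

/-- The tensor product `⊗ᵢ Vᵢ` of matrices over a finite family of sites, multilinear in the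
factors and indexed by functions like `QMat`. -/
def tensorOp : MultilinearMap R (fun _ : ι => Matrix m m R) (Matrix (ι → m) (ι → m) R) :=
  (ofLinearEquiv R).toLinearMap.compMultilinearMap <| .pi fun x => .pi fun y =>
    (MultilinearMap.mkPiAlgebra R ι R).compLinearMap fun i => entryLinearMap R R (x i) (y i)

lemma tensorOp_apply (V : ι → Matrix m m R) (x y : ι → m) :
    tensorOp V x y = ∏ i, V i (x i) (y i) :=
  rfl

lemma tensorOp_one [DecidableEq m] : tensorOp (R := R) (1 : ι → Matrix m m R) = 1 := by
  ext x y
  simp only [tensorOp_apply, Pi.one_apply, one_apply, Finset.prod_ite_zero, Finset.prod_const_one,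
    Finset.mem_univ, forall_const, funext_iff]

lemma tensorOp_mul [DecidableEq ι] [Fintype m] (V W : ι → Matrix m m R) :
    tensorOp (V * W) = tensorOp V * tensorOp W := by
  ext x y
  simp only [tensorOp_apply, Pi.mul_apply, mul_apply, Fintype.prod_sum, Finset.prod_mul_distrib]

lemma tensorOp_star [StarRing R] (V : ι → Matrix m m R) :
    tensorOp (star V) = star (tensorOp V) := by
  ext x y
  simp only [tensorOp_apply, Pi.star_apply, star_apply, star_prod]

end CommSemiring

lemma tensorOp_nonneg [Finite m] {V : ι → Matrix m m ℂ} (hV : 0 ≤ V) : 0 ≤ tensorOp V := by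
  classical
  cases nonempty_fintype m
  choose B hB using fun i => CStarAlgebra.nonneg_iff_eq_star_mul_self.mp (hV i)
  obtain rfl : V = star B * B := funext hB
  rw [tensorOp_mul, tensorOp_star]
  exact star_mul_self_nonneg _

variable [DecidableEq ι] [Fintype m]

/-- The functional `V ↦ tr (ρ ⊗ᵢ Vᵢ)`, giving the joint outcome probabilities of local
measurements of the state `ρ`. -/
def bornForm (ρ : Matrix (ι → m) (ι → m) ℂ) : MultilinearMap ℂ (fun _ : ι => Matrix m m ℂ) ℂ :=
  (traceLinearMap (ι → m) ℂ ℂ ∘ₗ LinearMap.mulLeft ℂ ρ).compMultilinearMap tensorOp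

lemma isPositiveMultilinear_bornForm {ρ : Matrix (ι → m) (ι → m) ℂ} (hρ : 0 ≤ ρ) :
    IsPositiveMultilinear (bornForm ρ) :=
  fun _ hV => trace_mul_nonneg hρ (tensorOp_nonneg hV)

lemma bornForm_one [DecidableEq m] (ρ : Matrix (ι → m) (ι → m) ℂ) :
    bornForm ρ 1 = trace ρ := by
  change trace (ρ * tensorOp 1) = trace ρ
  rw [tensorOp_one, mul_one]

end TensorOp

section SIC

lemma ofReal_sqrt_ofNat_sq (k : ℕ) [k.AtLeastTwo] :
    ((√(ofNat(k) : ℝ) : ℝ) : ℂ) ^ 2 = ofNat(k) := by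
  rw [← Complex.ofReal_pow, Real.sq_sqrt (Nat.ofNat_nonneg k), Complex.ofReal_ofNat]

/-- The cube root of unity `e^{2πi/3}`. -/
noncomputable def cubeRoot : ℂ := Complex.exp (2 * Real.pi * Complex.I / 3)

lemma isPrimitiveRoot_cubeRoot : IsPrimitiveRoot cubeRoot 3 :=
  Complex.isPrimitiveRoot_exp 3 three_ne_zero

lemma one_add_cubeRoot_add_sq : 1 + cubeRoot + cubeRoot ^ 2 = 0 := by
  have h := isPrimitiveRoot_cubeRoot.geom_sum_eq_zero (by norm_num)
  simpa only [Finset.sum_range_succ, Finset.sum_range_zero, zero_add, pow_zero, pow_one] using h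

lemma star_cubeRoot : star cubeRoot = cubeRoot ^ 2 := by
  have hnorm : star cubeRoot * cubeRoot = 1 := by
    rw [Complex.star_def, Complex.conj_mul', isPrimitiveRoot_cubeRoot.norm'_eq_one three_ne_zero]
    norm_num
  linear_combination cubeRoot ^ 2 * hnorm - star cubeRoot * isPrimitiveRoot_cubeRoot.pow_eq_one

lemma sum_sq_cubeRoot_pow (a b c : ℂ) :
    ∑ k : Fin 3, (a + b * cubeRoot ^ (k : ℕ) + c * cubeRoot ^ (2 * k : ℕ)) ^ 2 =
      3 * (a ^ 2 + 2 * (b * c)) := by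
  have hsum := one_add_cubeRoot_add_sq
  simp only [Fin.sum_univ_three, Fin.val_zero, Fin.val_one, Fin.val_two]
  grind

lemma exp_four_pi_div_three : Complex.exp (4 * Real.pi * Complex.I / 3) = cubeRoot ^ 2 := by
  rw [cubeRoot, ← Complex.exp_nat_mul]
  congr 1
  push_cast
  ring

lemma sicVec_succ (k : Fin 3) :
    sicVec k.succ = ((1 / √3 : ℝ) : ℂ) • ![1, √2 * cubeRoot ^ (k : ℕ)] := by
  have h : √(2 / 3) = 1 / √3 * √2 := by rw [Real.sqrt_div' 2 (by norm_num)]; ring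
  have hω : Complex.exp (2 * Real.pi * Complex.I / 3) = cubeRoot := rfl
  ext a
  fin_cases k <;> fin_cases a <;> simp [sicVec, hω, exp_four_pi_div_three, h] <;> ring

/-- The single-qubit SIC-POVM element `|φ̃ⱼ⟩⟨φ̃ⱼ|`. -/
noncomputable def sicEffect (j : Fin 4) : Matrix (Fin 2) (Fin 2) ℂ :=
  vecMulVec (sicTilde j) (star (sicTilde j))

lemma sicEffect_nonneg : 0 ≤ sicEffect :=
  fun j => (posSemidef_vecMulVec_self_star (sicTilde j)).nonneg

lemma sicEffect_zero : sicEffect 0 = !![1 / 2, 0; 0, 0] := by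
  ext a b
  fin_cases a <;> fin_cases b <;>
    simp [sicEffect, sicTilde, sicVec, vecMulVec_apply, ← sq, ofReal_sqrt_ofNat_sq]

lemma sicEffect_succ (k : Fin 3) :
    sicEffect k.succ = !![1 / 6, √2 / 6 * cubeRoot ^ (2 * k : ℕ);
      √2 / 6 * cubeRoot ^ (k : ℕ), 1 / 3] := by
  have hω : (cubeRoot ^ (k : ℕ)) * (cubeRoot ^ 2) ^ (k : ℕ) = 1 := by
    rw [← mul_pow, ← pow_succ', isPrimitiveRoot_cubeRoot.pow_eq_one, one_pow]
  have hstar : (starRingEnd ℂ) cubeRoot = cubeRoot ^ 2 := star_cubeRoot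
  have h2_ne : ((√2 : ℝ) : ℂ) ≠ 0 := Complex.ofReal_ne_zero.mpr (by positivity)
  have h3_ne : ((√3 : ℝ) : ℂ) ≠ 0 := Complex.ofReal_ne_zero.mpr (by positivity)
  ext a b
  fin_cases a <;> fin_cases b <;>
    simp [sicEffect, sicTilde, sicVec_succ, vecMulVec_apply, hstar, pow_mul] <;>
    field_simp <;> simp only [ofReal_sqrt_ofNat_sq, hω] <;> ring

lemma trace_sicEffect (j : Fin 4) : trace (sicEffect j) = 1 / 2 := by
  refine Fin.cases ?_ (fun k => ?_) j
  · norm_num [sicEffect_zero, trace_fin_two]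
  · norm_num [sicEffect_succ, trace_fin_two]

lemma trace_mul_sicEffect_zero (σ : Matrix (Fin 2) (Fin 2) ℂ) :
    trace (σ * sicEffect 0) = σ 0 0 / 2 := by
  simp [sicEffect_zero, trace_fin_two, mul_apply, div_eq_mul_inv]

lemma trace_mul_sicEffect_succ (σ : Matrix (Fin 2) (Fin 2) ℂ) (k : Fin 3) :
    trace (σ * sicEffect k.succ) = (σ 0 0 + 2 * σ 1 1) / 6 +
      √2 * σ 0 1 / 6 * cubeRoot ^ (k : ℕ) + √2 * σ 1 0 / 6 * cubeRoot ^ (2 * k : ℕ) := by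
  simp only [sicEffect_succ, trace_fin_two, mul_apply, Fin.sum_univ_two, of_apply, cons_val',
    cons_val_zero, cons_val_one, cons_val_fin_one]
  ring

-- The four effects form a 2-design: `∑ⱼ Eⱼ ⊗ Eⱼ = (1 + swap) / 6`.
lemma sum_sq_trace_mul_sicEffect (σ : Matrix (Fin 2) (Fin 2) ℂ) :
    ∑ j, trace (σ * sicEffect j) ^ 2 = (trace σ ^ 2 + trace (σ * σ)) / 6 := by
  rw [Fin.sum_univ_succ, trace_mul_sicEffect_zero]
  simp only [trace_mul_sicEffect_succ, sum_sq_cubeRoot_pow]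
  rw [trace_fin_two, trace_fin_two, mul_apply, mul_apply, Fin.sum_univ_two, Fin.sum_univ_two]
  linear_combination σ 0 1 * σ 1 0 / 6 * ofReal_sqrt_ofNat_sq 2

lemma sicEffect_le (j : Fin 4) : sicEffect j ≤ (1 / 2 : ℂ) • 1 :=
  trace_sicEffect j ▸ le_trace_smul_one (sicEffect_nonneg j)

lemma sum_sq_sicEffect_le (L : Matrix (Fin 2) (Fin 2) ℂ →ₚ[ℂ] ℂ) :
    ∑ j, L (sicEffect j) ^ 2 ≤ 1 / 3 * L 1 ^ 2 := by
  obtain ⟨σ, hσ, hL⟩ := exists_nonneg_trace_mul_eq L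
  have hpurity := trace_mul_self_le_sq_trace hσ
  simp only [hL, mul_one, sum_sq_trace_mul_sicEffect]
  calc (trace σ ^ 2 + trace (σ * σ)) / 6 ≤ (trace σ ^ 2 + trace σ ^ 2) / 6 := by gcongr
    _ = 1 / 3 * trace σ ^ 2 := by ring

lemma sicProj_eq_tensorOp {n : ℕ} (S : Finset (Fin n)) (q : {i : Fin n // i ∈ S} → Fin 4) :
    sicProj S q = tensorOp fun i => if h : i ∈ S then sicEffect (q ⟨i, h⟩) else 1 := by
  ext x y
  rw [tensorOp_apply, sicProj, localOp]
  refine Finset.prod_congr rfl fun i _ => ?_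
  split_ifs with h
  · rfl
  · rw [one_apply, if_pos ‹_›]
  · rw [one_apply, if_neg ‹_›]

/-- The functional `V ↦ tr (ρ ⊗ᵢ Vᵢ)` of the factors at the qubits in `S`, with the identity at
the others. -/
noncomputable def localBornForm {n : ℕ} (ρ : QMat n) (S : Finset (Fin n)) :
    MultilinearMap ℂ (fun _ : {i : Fin n // i ∈ S} => Matrix (Fin 2) (Fin 2) ℂ) ℂ :=
  (bornForm ρ).domDomRestrict (· ∈ S) 1

variable {n : ℕ} {ρ : QMat n} (S : Finset (Fin n))

lemma isPositiveMultilinear_localBornForm (hρ : 0 ≤ ρ) :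
    IsPositiveMultilinear (localBornForm ρ S) :=
  (isPositiveMultilinear_bornForm hρ).domDomRestrict _ zero_le_one

lemma localBornForm_one : localBornForm ρ S 1 = trace ρ := by
  rw [← bornForm_one]
  exact congrArg (bornForm ρ) (funext fun i => by simp)

lemma ofReal_sicBorn (hρ : 0 ≤ ρ) (q : {i : Fin n // i ∈ S} → Fin 4) :
    (sicBorn ρ S q : ℂ) = localBornForm ρ S (sicEffect ∘ q) := by
  have htrace : trace (ρ * sicProj S q) = localBornForm ρ S (sicEffect ∘ q) := by
    rw [sicProj_eq_tensorOp]
    rfl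
  have hnonneg : 0 ≤ localBornForm ρ S (sicEffect ∘ q) :=
    isPositiveMultilinear_localBornForm S hρ fun i => sicEffect_nonneg (q i)
  rw [sicBorn, htrace]
  exact (Complex.eq_re_of_ofReal_le hnonneg).symm

lemma sicBorn_le (hρ : 0 ≤ ρ) (htr : trace ρ = 1) (q : {i : Fin n // i ∈ S} → Fin 4) :
    sicBorn ρ S q ≤ (1 / 2) ^ S.card := by
  rw [← Complex.real_le_real]
  push_cast
  calc (sicBorn ρ S q : ℂ) = localBornForm ρ S (sicEffect ∘ q) := ofReal_sicBorn S hρ q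
    _ ≤ localBornForm ρ S (fun _ => (1 / 2 : ℂ) • 1) :=
      (isPositiveMultilinear_localBornForm S hρ).apply_le_apply
        (fun i => sicEffect_nonneg (q i)) fun i => sicEffect_le (q i)
    _ = (1 / 2) ^ S.card * localBornForm ρ S 1 := by
      rw [MultilinearMap.map_smul_univ, Finset.prod_const, Finset.card_univ, Fintype.card_coe,
        smul_eq_mul]
      rfl
    _ = (1 / 2) ^ S.card := by rw [localBornForm_one, htr, mul_one]

lemma sum_sq_sicBorn_le (hρ : 0 ≤ ρ) (htr : trace ρ = 1) :
    ∑ q, sicBorn ρ S q ^ 2 ≤ (1 / 3) ^ S.card := by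
  have h := (isPositiveMultilinear_localBornForm S hρ).sum_pow_le sicEffect_nonneg zero_le_one
    (one_div_nonneg.mpr zero_le_three) sum_sq_sicEffect_le
  rw [Fintype.card_coe] at h
  change _ ≤ _ * localBornForm ρ S 1 ^ 2 at h
  simp only [← ofReal_sicBorn S hρ, localBornForm_one, htr, one_pow, mul_one] at h
  rw [← Complex.real_le_real]
  push_cast
  exact h

end SIC

theorem SIC_probability_bounds_general (n : ℕ) (ρ : QMat n)
    (hρ : ρ.PosSemidef) (htr : Matrix.trace ρ = 1) (S : Finset (Fin n)) :
    (∀ q, sicBorn ρ S q ≤ (1 / 2) ^ S.card) ∧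
    ∑ q, sicBorn ρ S q ^ 3 ≤ (1 / 2) ^ S.card * ∑ q, sicBorn ρ S q ^ 2 ∧
    ∑ q, sicBorn ρ S q ^ 2 ≤ (1 / 3) ^ S.card ∧
    ∑ q, sicBorn ρ S q ^ 3 ≤ (1 / 6) ^ S.card := by
  have hmax := sicBorn_le S hρ.nonneg htr
  have hsq := sum_sq_sicBorn_le S hρ.nonneg htr
  have hcube : ∑ q, sicBorn ρ S q ^ 3 ≤ (1 / 2) ^ S.card * ∑ q, sicBorn ρ S q ^ 2 := by
    rw [Finset.mul_sum]
    refine Finset.sum_le_sum fun q _ => ?_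
    rw [pow_succ' _ 2]
    exact mul_le_mul_of_nonneg_right (hmax q) (sq_nonneg _)
  refine ⟨hmax, hcube, hsq, hcube.trans ?_⟩
  calc (1 / 2 : ℝ) ^ S.card * ∑ q, sicBorn ρ S q ^ 2
      ≤ (1 / 2) ^ S.card * (1 / 3) ^ S.card := by gcongr
    _ = (1 / 6) ^ S.card := by rw [← mul_pow]; norm_num

/-- **Bounds on the SIC outcome distribution**: for any density matrix `ρ`,
`P(q) ≤ 2^{-s}` and `∑_q P(q)³ ≤ 2^{-s} ∑_q P(q)²`; moreover if `ρ` is pure then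
`∑_q P(q)² ≤ 3^{-s}` and hence `∑_q P(q)³ ≤ 6^{-s}`. -/
theorem SIC_probability_bounds (n : ℕ) (ρ : QMat n)
    (hρ : ρ.PosSemidef) (htr : Matrix.trace ρ = 1)
    (S : Finset (Fin n)) (hS : S.Nonempty) :
    (∀ q : ({i : Fin n // i ∈ S} → Fin 4), sicBorn ρ S q ≤ (1 / 2 : ℝ) ^ S.card) ∧
    ((∑ q : ({i : Fin n // i ∈ S} → Fin 4), (sicBorn ρ S q) ^ 3)
      ≤ (1 / 2 : ℝ) ^ S.card * ∑ q : ({i : Fin n // i ∈ S} → Fin 4), (sicBorn ρ S q) ^ 2) ∧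
    (∀ ψ : (Fin n → Fin 2) → ℂ, (∑ x, star (ψ x) * ψ x) = 1 →
      ρ = Matrix.vecMulVec ψ (star ψ) →
      (∑ q : ({i : Fin n // i ∈ S} → Fin 4), (sicBorn ρ S q) ^ 2) ≤ (1 / 3 : ℝ) ^ S.card ∧
      (∑ q : ({i : Fin n // i ∈ S} → Fin 4), (sicBorn ρ S q) ^ 3) ≤ (1 / 6 : ℝ) ^ S.card) := by
  obtain ⟨hmax, hcube, hmoments⟩ := SIC_probability_bounds_general n ρ hρ htr S
  exact ⟨hmax, hcube, fun _ _ _ => hmoments⟩
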